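/- Let ω be a nonzero real number, suppose iω is an eigenvalue of P with geometric multiplicity p ≥ 1, and let Q₂ ∈ ℂ^{n×p} satisfy Q₂*Q₂ = I_p with the columns of Q₂ spanning the nullspace of P(iω). Let T ∈ ℂ^{p×p} be Hermitian positive definite. Then for every t > 0, neither iω nor −iω is an eigenvalue of the damped polynomial P̂ₜ(λ) := P(λ) + λ·t·Q₂TQ₂*. -/

import Mathlib

open Matrix ComplexOrder

/-! For `z ≠ 0` on the imaginary axis, `z ^ 2 • M + K` is Hermitian and `z • D` is skew-Hermitian,
so a null vector `x` of their sum satisfies `x* D x = 0`, that is, `D x = 0`: a purely imaginary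
mode does not feel the damping. In particular `P(z)` and `P(-z)` have the same null vectors, and
adding the damping `t Q T Q*` keeps only those orthogonal to the columns of `Q`. Since all of them
lie in the range of `Q`, only `0` survives. -/

section Kernels

variable {R 𝕜 n p : Type*} [RCLike 𝕜] [Fintype n] [Fintype p]

theorem star_dotProduct_mulVec_self_of_isHermitian [NonUnitalSemiring R] [StarRing R]
    {H : Matrix n n R} (hH : H.IsHermitian) (x : n → R) :
    star (star x ⬝ᵥ H *ᵥ x) = star x ⬝ᵥ H *ᵥ x := by
  rw [← star_dotProduct_star, star_star, star_mulVec, hH.eq, ← dotProduct_mulVec]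

theorem isHermitian_add_smul_posSemidef_mulVec_eq_zero_iff {H G : Matrix n n 𝕜}
    (hH : H.IsHermitian) (hG : G.PosSemidef) {z : 𝕜} (hz : z ∈ skewAdjoint 𝕜) (hz0 : z ≠ 0)
    {x : n → 𝕜} : (H + z • G) *ᵥ x = 0 ↔ H *ᵥ x = 0 ∧ G *ᵥ x = 0 := by
  rw [add_mulVec, smul_mulVec]
  refine ⟨fun h ↦ ?_, fun ⟨hHx, hGx⟩ ↦ by rw [hHx, hGx, smul_zero, add_zero]⟩
  have hform : star x ⬝ᵥ H *ᵥ x + z * (star x ⬝ᵥ G *ᵥ x) = 0 := by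
    rw [← smul_eq_mul, ← dotProduct_smul, ← dotProduct_add, h, dotProduct_zero]
  have hconj : star x ⬝ᵥ H *ᵥ x - z * (star x ⬝ᵥ G *ᵥ x) = 0 := by
    simpa only [star_add, star_mul', star_dotProduct_mulVec_self_of_isHermitian hH,
      star_dotProduct_mulVec_self_of_isHermitian hG.isHermitian, skewAdjoint.mem_iff.mp hz,
      neg_mul, ← sub_eq_add_neg, star_zero] using congrArg star hform
  have hprod : 2 * z * (star x ⬝ᵥ G *ᵥ x) = 0 := by linear_combination hform - hconj
  have hGx : G *ᵥ x = 0 := (hG.dotProduct_mulVec_zero_iff x).mp <|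
    (mul_eq_zero.mp hprod).resolve_left (mul_ne_zero two_ne_zero hz0)
  exact ⟨by rwa [hGx, smul_zero, add_zero] at h, hGx⟩

theorem posSemidef_add_mulVec_eq_zero_iff {A B : Matrix n n 𝕜} (hA : A.PosSemidef)
    (hB : B.PosSemidef) {x : n → 𝕜} : (A + B) *ᵥ x = 0 ↔ A *ᵥ x = 0 ∧ B *ᵥ x = 0 := by
  rw [← hA.dotProduct_mulVec_zero_iff, ← hB.dotProduct_mulVec_zero_iff,
    ← (hA.add hB).dotProduct_mulVec_zero_iff, add_mulVec, dotProduct_add]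
  exact add_eq_zero_iff_of_nonneg (hA.dotProduct_mulVec_nonneg x) (hB.dotProduct_mulVec_nonneg x)

theorem mul_posDef_mul_conjTranspose_mulVec_eq_zero_iff [Ring R] [PartialOrder R] [StarRing R]
    {T : Matrix p p R} (hT : T.PosDef) (Q : Matrix n p R) {x : n → R} :
    (Q * T * Qᴴ) *ᵥ x = 0 ↔ Qᴴ *ᵥ x = 0 := by
  refine ⟨fun h ↦ ?_, fun h ↦ by rw [← mulVec_mulVec, h, mulVec_zero]⟩
  have hform : star (Qᴴ *ᵥ x) ⬝ᵥ T *ᵥ (Qᴴ *ᵥ x) = 0 := by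
    rw [star_mulVec, conjTranspose_conjTranspose, ← dotProduct_mulVec, mulVec_mulVec,
      mulVec_mulVec, h, dotProduct_zero]
  by_contra hne
  exact (hT.dotProduct_mulVec_pos hne).ne' hform

end Kernels

/-- The quadratic matrix polynomial `P(z) = z² M + z D + K` with mass matrix `M`, damping matrix `D`
and stiffness matrix `K`; the undamped polynomial `P₀` is the case `D = 0`. It is encoded as the
function of `z`. -/
def quadraticPoly {R n : Type*} [Semiring R] (M D K : Matrix n n R) (z : R) : Matrix n n R :=
  z ^ 2 • M + z • D + K

namespace quadraticPoly

theorem add_damping {R n : Type*} [Semiring R] (M D E K : Matrix n n R) (z : R) :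
    quadraticPoly M (D + E) K z = quadraticPoly M D K z + z • E := by
  simp only [quadraticPoly, smul_add]
  abel

variable {𝕜 n p : Type*} [RCLike 𝕜] {M D E K : Matrix n n 𝕜} {z : 𝕜}

theorem isHermitian_undamped (hM : M.IsHermitian) (hK : K.IsHermitian) (hz : z ∈ skewAdjoint 𝕜) :
    (quadraticPoly M 0 K z).IsHermitian := by
  have hz2 : IsSelfAdjoint (z ^ 2) := by
    rw [isSelfAdjoint_iff, star_pow, skewAdjoint.mem_iff.mp hz, neg_sq]
  rw [quadraticPoly, smul_zero, add_zero]
  exact (hM.smul hz2).add hK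

variable [Fintype n] [Fintype p] {x : n → 𝕜}

theorem mulVec_eq_zero_iff (hM : M.IsHermitian) (hD : D.PosSemidef) (hK : K.IsHermitian)
    (hz : z ∈ skewAdjoint 𝕜) (hz0 : z ≠ 0) :
    quadraticPoly M D K z *ᵥ x = 0 ↔ quadraticPoly M 0 K z *ᵥ x = 0 ∧ D *ᵥ x = 0 := by
  rw [← isHermitian_add_smul_posSemidef_mulVec_eq_zero_iff (isHermitian_undamped hM hK hz) hD hz
    hz0, ← add_damping, zero_add]

theorem neg_mulVec_eq_zero_iff (hM : M.IsHermitian) (hD : D.PosSemidef) (hK : K.IsHermitian)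
    (hz : z ∈ skewAdjoint 𝕜) (hz0 : z ≠ 0) :
    quadraticPoly M D K (-z) *ᵥ x = 0 ↔ quadraticPoly M D K z *ᵥ x = 0 := by
  have heven : quadraticPoly M 0 K (-z) = quadraticPoly M 0 K z := by
    simp only [quadraticPoly, neg_sq, smul_zero]
  rw [mulVec_eq_zero_iff hM hD hK (neg_mem hz) (neg_ne_zero.mpr hz0), heven,
    ← mulVec_eq_zero_iff hM hD hK hz hz0]

theorem add_damping_mulVec_eq_zero_iff (hM : M.IsHermitian) (hD : D.PosSemidef)
    (hE : E.PosSemidef) (hK : K.IsHermitian) (hz : z ∈ skewAdjoint 𝕜) (hz0 : z ≠ 0) :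
    quadraticPoly M (D + E) K z *ᵥ x = 0 ↔ quadraticPoly M D K z *ᵥ x = 0 ∧ E *ᵥ x = 0 := by
  rw [mulVec_eq_zero_iff hM (hD.add hE) hK hz hz0, mulVec_eq_zero_iff hM hD hK hz hz0,
    posSemidef_add_mulVec_eq_zero_iff hD hE, and_assoc]

theorem det_add_damping_ne_zero [DecidableEq n] (hM : M.IsHermitian) (hD : D.PosSemidef)
    (hK : K.IsHermitian) (hz : z ∈ skewAdjoint 𝕜) (hz0 : z ≠ 0) {Q : Matrix n p 𝕜}
    (hQ : ∀ x, quadraticPoly M D K z *ᵥ x = 0 → ∃ y, x = Q *ᵥ y)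
    {T : Matrix p p 𝕜} (hT : T.PosDef) :
    (quadraticPoly M (D + Q * T * Qᴴ) K z).det ≠ 0 := by
  rw [Ne, ← exists_mulVec_eq_zero_iff]
  rintro ⟨x, hx0, hx⟩
  obtain ⟨hPx, hEx⟩ := (add_damping_mulVec_eq_zero_iff hM hD
    (hT.posSemidef.mul_mul_conjTranspose_same Q) hK hz hz0).mp hx
  obtain ⟨y, rfl⟩ := hQ x hPx
  rw [mul_posDef_mul_conjTranspose_mulVec_eq_zero_iff hT, mulVec_mulVec,
    conjTranspose_mul_self_mulVec_eq_zero] at hEx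
  exact hx0 hEx

end quadraticPoly

theorem stmt17_general {n p : Type*} [Fintype n] [DecidableEq n] [Fintype p]
    {M D K : Matrix n n ℂ} (hM : M.IsHermitian) (hD : D.PosSemidef) (hK : K.IsHermitian)
    {ω : ℝ} (hω : ω ≠ 0) {Q : Matrix n p ℂ}
    (hQ : ∀ x, quadraticPoly M D K (ω * Complex.I) *ᵥ x = 0 → ∃ y, x = Q *ᵥ y)
    {T : Matrix p p ℂ} (hT : T.PosDef) {t : ℝ} (ht : 0 < t) :
    (quadraticPoly M (D + (t : ℂ) • (Q * T * Qᴴ)) K (ω * Complex.I)).det ≠ 0 ∧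
      (quadraticPoly M (D + (t : ℂ) • (Q * T * Qᴴ)) K (-(ω * Complex.I))).det ≠ 0 := by
  have hz : ω * Complex.I ∈ skewAdjoint ℂ := by simp [skewAdjoint.mem_iff]
  have hz0 : ω * Complex.I ≠ 0 := mul_ne_zero (mod_cast hω) Complex.I_ne_zero
  have htT : ((t : ℂ) • T).PosDef := hT.smul (mod_cast ht)
  rw [← Matrix.smul_mul, ← Matrix.mul_smul]
  exact ⟨quadraticPoly.det_add_damping_ne_zero hM hD hK hz hz0 hQ htT,
    quadraticPoly.det_add_damping_ne_zero hM hD hK (neg_mem hz) (neg_ne_zero.mpr hz0)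
      (fun x hx ↦ hQ x ((quadraticPoly.neg_mulVec_eq_zero_iff hM hD hK hz hz0).mp hx)) htT⟩

/-- If `iω` is an eigenvalue of `P` with geometric multiplicity `p ≥ 1`, `Q₂` has orthonormal
columns spanning the nullspace of `P(iω)`, and `T > 0`, then for every `t > 0` neither `iω`
nor `−iω` is an eigenvalue of `P̂ₜ(λ) = P(λ) + λ t Q₂ T Q₂*`. -/
theorem stmt17 {n p : ℕ}
    (M D K : Matrix (Fin n) (Fin n) ℂ)
    (hM : M.PosDef) (hD : D.PosSemidef) (hK : K.PosSemidef)
    (P : ℂ → Matrix (Fin n) (Fin n) ℂ)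
    (hP : ∀ z : ℂ, P z = z ^ 2 • M + z • D + K)
    (ω : ℝ) (hω : ω ≠ 0) (hp : 1 ≤ p)
    (hgeo : Module.finrank ℂ
      (LinearMap.ker (P ((ω : ℂ) * Complex.I)).mulVecLin) = p)
    (Q₂ : Matrix (Fin n) (Fin p) ℂ) (hQorth : Q₂ᴴ * Q₂ = 1)
    (hQspan : ∀ x : Fin n → ℂ,
      (P ((ω : ℂ) * Complex.I)).mulVec x = 0 ↔ ∃ y : Fin p → ℂ, x = Q₂.mulVec y)
    (T : Matrix (Fin p) (Fin p) ℂ) (hT : T.PosDef)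
    (Ph : ℝ → ℂ → Matrix (Fin n) (Fin n) ℂ)
    (hPh : ∀ (t : ℝ) (z : ℂ), Ph t z = P z + (z * (t : ℂ)) • (Q₂ * T * Q₂ᴴ)) :
    ∀ t : ℝ, 0 < t →
      (Ph t ((ω : ℂ) * Complex.I)).det ≠ 0 ∧
      (Ph t (-((ω : ℂ) * Complex.I))).det ≠ 0 := by
  intro t ht
  obtain rfl : P = quadraticPoly M D K := funext hP
  simpa only [hPh, quadraticPoly.add_damping, smul_smul] using
    stmt17_general hM.isHermitian hD hK.isHermitian hω (fun x ↦ (hQspan x).mp) hT ht
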